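/- Let K be a field of characteristic zero and μ ∈ K a nonzero scalar. Then the algebra Ã has a right ideal which is stably free but not free as a right Ã-module; in fact the right ideal K = {f ∈ Ã : (1+u)f ∈ ωÃ} is stably free and non-free. -/

import Mathlib

noncomputable section

/-- Defining relation of the algebra `Ã = K[u][ω;σ,δ]` with `σ(u) = μ⁻¹u`, `δ(u) = -μ⁻¹u`:
with `u = ι 0` and `ω = ι 1`, the relation is `uω = μ⁻¹ωu − μ⁻¹u`. -/
inductive TildeRel (K : Type) [Field K] (μ : K) :
    FreeAlgebra K (Fin 2) → FreeAlgebra K (Fin 2) → Prop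
  | rel : TildeRel K μ
      (FreeAlgebra.ι K (0 : Fin 2) * FreeAlgebra.ι K (1 : Fin 2))
      (μ⁻¹ • (FreeAlgebra.ι K (1 : Fin 2) * FreeAlgebra.ι K (0 : Fin 2)) -
        μ⁻¹ • FreeAlgebra.ι K (0 : Fin 2))

/-- The algebra `Ã`. -/
abbrev TildeA (K : Type) [Field K] (μ : K) := RingQuot (TildeRel K μ)

/-- The generator `u` of `Ã`. -/
def TildeA.u (K : Type) [Field K] (μ : K) : TildeA K μ :=
  RingQuot.mkAlgHom K (TildeRel K μ) (FreeAlgebra.ι K (0 : Fin 2))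

/-- The generator `ω` of `Ã`. -/
def TildeA.w (K : Type) [Field K] (μ : K) : TildeA K μ :=
  RingQuot.mkAlgHom K (TildeRel K μ) (FreeAlgebra.ι K (1 : Fin 2))

/-- Left multiplication by `r` as an endomorphism of `A` viewed as a right `A`-module
(i.e. as a left `Aᵐᵒᵖ`-module). -/
def leftMulRight {A : Type} [Ring A] (r : A) : A →ₗ[Aᵐᵒᵖ] A where
  toFun x := r * x
  map_add' := mul_add r
  map_smul' m x := by
    simp only [MulOpposite.smul_eq_mul_unop, RingHom.id_apply, mul_assoc]

/-- A right `A`-module `P` (realized as a left `Aᵐᵒᵖ`-module) is stably free if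
`P ⊕ Aⁿ ≅ Aᵐ` as right `A`-modules for some naturals `n m`. -/
def IsStablyFreeRight (A : Type) [Ring A] (P : Type) [AddCommGroup P] [Module Aᵐᵒᵖ P] : Prop :=
  ∃ n m : ℕ, Nonempty ((P × (Fin n → A)) ≃ₗ[Aᵐᵒᵖ] (Fin m → A))

/-! ### General module-theoretic lemmas -/

theorem mem_rightIdeal_iff {A : Type} [Ring A] (a w x : A) :
    x ∈ Submodule.comap (leftMulRight a) (Submodule.span Aᵐᵒᵖ {w}) ↔ ∃ c, a * x = w * c := by
  rw [Submodule.mem_comap, Submodule.mem_span_singleton]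
  constructor
  · rintro ⟨c, hc⟩
    exact ⟨c.unop, hc.symm⟩
  · rintro ⟨c, hc⟩
    exact ⟨MulOpposite.op c, hc.symm⟩

/-- The splitting map `A² → P ⊕ A`. -/
def splitMap {A : Type} [Ring A] (a w s t : A) (h : a * s - w * t = 1) :
    (A × A) →ₗ[Aᵐᵒᵖ]
      (Submodule.comap (leftMulRight a) (Submodule.span Aᵐᵒᵖ {w})) × A where
  toFun p := (⟨p.1 - s * (a * p.1 - w * p.2), (mem_rightIdeal_iff _ _ _).2
    ⟨p.2 - t * (a * p.1 - w * p.2), by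
      have : a * s = 1 + w * t := by rw [← h]; abel
      rw [mul_sub a, ← mul_assoc a s, this]
      noncomm_ring⟩⟩, a * p.1 - w * p.2)
  map_add' p q := by
    ext <;> simp <;> noncomm_ring
  map_smul' c p := by
    ext <;> simp [MulOpposite.smul_eq_mul_unop] <;> noncomm_ring

theorem splitMap_bijective {A : Type} [Ring A] (a w s t : A) (h : a * s - w * t = 1)
    (hw : ∀ b, w * b = 0 → b = 0) : Function.Bijective (splitMap a w s t h) := by
  constructor
  · rw [injective_iff_map_eq_zero]
    rintro ⟨x, y⟩ hxy
    have h1 := congrArg Prod.snd hxy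
    have h2 := congrArg (fun z => (z.1 : A)) hxy
    simp only [splitMap, LinearMap.coe_mk, AddHom.coe_mk, Prod.snd_zero, Prod.fst_zero,
      ZeroMemClass.coe_zero] at h1 h2
    rw [h1, mul_zero, sub_zero] at h2
    rw [h2, mul_zero, zero_sub, neg_eq_zero] at h1
    rw [h2, hw y h1]
    rfl
  · rintro ⟨⟨p, hp⟩, r⟩
    obtain ⟨c, hc⟩ := (mem_rightIdeal_iff _ _ _).1 hp
    have e : a * (p + s * r) - w * (c + t * r) = r := by
      have : a * (p + s * r) - w * (c + t * r) = (a * p - w * c) + (a * s - w * t) * r := by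
        noncomm_ring
      rw [this, hc, h]; simp
    refine ⟨(p + s * r, c + t * r), ?_⟩
    ext
    · simp [splitMap, e]
    · simp [splitMap, e]

/-- The standard basis of `A` as right module. -/
def rightBasis (A : Type) [Ring A] : Module.Basis Unit Aᵐᵒᵖ A :=
  (Module.Basis.singleton Unit Aᵐᵒᵖ).map
    { toFun := fun x => x.unop
      invFun := fun x => MulOpposite.op x
      left_inv := fun _ => rfl
      right_inv := fun _ => rfl
      map_add' := fun _ _ => rfl
      map_smul' := fun _ _ => rfl }

theorem cyclic_of_free {A : Type} [Ring A] [InvariantBasisNumber A] {P : Type} [AddCommMonoid P]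
    [Module Aᵐᵒᵖ P] (e : (A × A) ≃ₗ[Aᵐᵒᵖ] (P × A)) [Module.Free Aᵐᵒᵖ P] :
    ∃ f : P, ∀ p : P, ∃ r : A, p = MulOpposite.op r • f := by
  have : Nontrivial Aᵐᵒᵖ := nontrivial_of_invariantBasisNumber _
  let b := Module.Free.chooseBasis Aᵐᵒᵖ P
  have b1 := b.prod (rightBasis A)
  have b2 := ((rightBasis A).prod (rightBasis A)).map e
  have hc := mk_eq_mk_of_basis b1 b2
  have hcard : Cardinal.mk (Module.Free.ChooseBasisIndex Aᵐᵒᵖ P) = 1 := by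
    simp only [Cardinal.mk_sum, Cardinal.mk_fintype, Fintype.card_unit, Cardinal.lift_id,
      Nat.cast_one] at hc
    exact Cardinal.add_one_inj.1 (hc.trans (by norm_num [Fintype.card_sum]))
  rw [Cardinal.eq_one_iff_unique] at hcard
  obtain ⟨hs, ⟨i⟩⟩ := hcard
  refine ⟨b i, fun p => ⟨(b.repr p i).unop, ?_⟩⟩
  let _ : Unique (Module.Free.ChooseBasisIndex Aᵐᵒᵖ P) := ⟨⟨i⟩, fun j => Subsingleton.elim _ _⟩
  conv_lhs => rw [← b.sum_repr p]
  rw [Fintype.sum_unique]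
  rfl

theorem ibn_of_hom {A : Type} [Ring A] {F : Type} [Field F] (φ : A →+* F) :
    InvariantBasisNumber A := by
  rw [invariantBasisNumber_iff_matrix]
  intro n m P Q h1 h2
  refine (invariantBasisNumber_iff_matrix (R := F)).1 inferInstance n m
    (P.map φ) (Q.map φ) ?_ ?_
  · rw [← Matrix.map_mul, h1]; simp
  · rw [← Matrix.map_mul, h2]; simp

/-! ### The algebra -/

namespace TildeA

open Polynomial

variable (K : Type) [Field K] (μ : K)

theorem w_mul_u (hμ : μ ≠ 0) : w K μ * u K μ = u K μ * (μ • w K μ + 1) := by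
  have h : u K μ * w K μ = μ⁻¹ • (w K μ * u K μ) - μ⁻¹ • u K μ := by
    have := RingQuot.mkAlgHom_rel K (TildeRel.rel (K := K) (μ := μ))
    simpa [u, w] using this
  rw [mul_add, mul_smul_comm, h, smul_sub, smul_smul, smul_smul, mul_inv_cancel₀ hμ]
  simp

theorem induct (p : TildeA K μ → Prop) (hK : ∀ r, p (algebraMap K _ r)) (hu : p (u K μ))
    (hw : p (w K μ)) (hadd : ∀ a b, p a → p b → p (a + b)) (hmul : ∀ a b, p a → p b → p (a * b))
    (a : TildeA K μ) : p a := by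
  obtain ⟨x, rfl⟩ := RingQuot.mkAlgHom_surjective K (TildeRel K μ) a
  induction x using FreeAlgebra.induction with
  | grade0 r => simpa using hK r
  | grade1 i => fin_cases i; exacts [hu, hw]
  | mul a b ha hb => rw [map_mul]; exact hmul _ _ ha hb
  | add a b ha hb => rw [map_add]; exact hadd _ _ ha hb

/-- Lift of a pair of elements satisfying the relation. -/
def liftPair (hμ : μ ≠ 0) {B : Type} [Ring B] [Algebra K B] (x y : B)
    (h : y * x = x * (μ • y + 1)) : TildeA K μ →ₐ[K] B :=
  RingQuot.liftAlgHom K ⟨FreeAlgebra.lift K ![x, y], by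
    rintro _ _ ⟨⟩
    simp [h, mul_add, smul_smul, hμ]⟩

theorem liftPair_u (hμ : μ ≠ 0) {B : Type} [Ring B] [Algebra K B] (x y : B)
    (h : y * x = x * (μ • y + 1)) : liftPair K μ hμ x y h (u K μ) = x := by
  simp [liftPair, u, RingQuot.liftAlgHom_mkAlgHom_apply]

theorem liftPair_w (hμ : μ ≠ 0) {B : Type} [Ring B] [Algebra K B] (x y : B)
    (h : y * x = x * (μ • y + 1)) : liftPair K μ hμ x y h (w K μ) = y := by
  simp [liftPair, w, RingQuot.liftAlgHom_mkAlgHom_apply]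

/-- `τ^j(X)`. -/
def tau : ℕ → K[X]
  | 0 => X
  | j + 1 => C μ * tau j + 1

theorem tau_natDegree (hμ : μ ≠ 0) (j : ℕ) : (tau K μ j).natDegree = 1 := by
  induction j with
  | zero => simp [tau]
  | succ j ih =>
    rw [tau, ← C_1, natDegree_add_C, natDegree_C_mul hμ, ih]

theorem tau_ne (hμ : μ ≠ 0) (j : ℕ) : tau K μ j ≠ 0 := by
  intro h
  have := tau_natDegree K μ hμ j
  simp [h] at this

/-- action of `ω` -/
def W : K[X][X] →ₗ[K] K[X][X] :=
  Polynomial.lsum fun j => ((monomial j).restrictScalars K).comp (LinearMap.mulLeft K (tau K μ j))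

theorem W_monomial (j : ℕ) (q : K[X]) : W K μ (monomial j q) = monomial j (tau K μ j * q) := by
  simp [W, sum_monomial_index]

theorem W_coeff (n : K[X][X]) (j : ℕ) : (W K μ n).coeff j = tau K μ j * n.coeff j := by
  induction n using Polynomial.induction_on' with
  | add p q hp hq => simp [hp, hq, mul_add]
  | monomial i a =>
    rw [W_monomial, coeff_monomial, coeff_monomial]
    split_ifs with h <;> simp [h]

/-- The representation. -/
def rho (hμ : μ ≠ 0) : TildeA K μ →ₐ[K] Module.End K K[X][X] :=
  liftPair K μ hμ (LinearMap.mulLeft K (X : K[X][X])) (W K μ) (by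
    ext1 n
    ext1 j
    cases j with
    | zero => simp [W_coeff]
    | succ j => simp [W_coeff, tau, add_mul, smul_eq_C_mul, mul_assoc])

theorem rho_u (hμ : μ ≠ 0) (n : K[X][X]) : rho K μ hμ (u K μ) n = X * n := by
  simp [rho, liftPair_u]

theorem rho_w (hμ : μ ≠ 0) (n : K[X][X]) : rho K μ hμ (w K μ) n = W K μ n := by
  simp [rho, liftPair_w]

theorem rho_u_pow (hμ : μ ≠ 0) (i : ℕ) (n : K[X][X]) :
    rho K μ hμ (u K μ ^ i) n = X ^ i * n := by
  induction i with
  | zero => simp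
  | succ i ih => rw [pow_succ', map_mul, Module.End.mul_apply, ih, rho_u, pow_succ', mul_assoc]

theorem rho_aeval (hμ : μ ≠ 0) (p : K[X]) (n : K[X][X]) (j : ℕ) :
    (rho K μ hμ (aeval (w K μ) p) n).coeff j = p.comp (tau K μ j) * n.coeff j := by
  induction p using Polynomial.induction_on generalizing n with
  | C a => simp [smul_eq_C_mul, Algebra.algebraMap_eq_smul_one]
  | add p q hp hq => simp [hp, hq, add_mul]
  | monomial k a ih =>
    rw [pow_succ, ← mul_assoc, map_mul, map_mul, Module.End.mul_apply, ih, aeval_X, rho_w, W_coeff,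
      mul_comp (_ * _), X_comp]
    ring

/-- `Σ Y^i p_i ↦ Σ u^i p_i(ω)`. -/
def Psi : K[X][X] →ₗ[K] TildeA K μ :=
  Polynomial.lsum fun i => (LinearMap.mulLeft K (u K μ ^ i)).comp (aeval (w K μ)).toLinearMap

theorem Psi_monomial (j : ℕ) (q : K[X]) :
    Psi K μ (monomial j q) = u K μ ^ j * aeval (w K μ) q := by
  simp [Psi, sum_monomial_index]

theorem rho_Psi_coeff (hμ : μ ≠ 0) (m n : K[X][X]) (N : ℕ) :
    (rho K μ hμ (Psi K μ m) n).coeff N =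
      ∑ x ∈ Finset.HasAntidiagonal.antidiagonal N, (m.coeff x.1).comp (tau K μ x.2) * n.coeff x.2 := by
  induction m using Polynomial.induction_on' with
  | add p q hp hq => simp [hp, hq, add_mul, Finset.sum_add_distrib]
  | monomial i a =>
    rw [Psi_monomial, map_mul, Module.End.mul_apply, rho_u_pow, coeff_mul]
    refine Finset.sum_congr rfl fun x _ => ?_
    rw [rho_aeval, coeff_X_pow, coeff_monomial]
    by_cases h : i = x.1
    · simp [h]
    · simp [h, Ne.symm h]

/-- Coordinates. -/
def Phi (hμ : μ ≠ 0) (a : TildeA K μ) : K[X][X] := rho K μ hμ a 1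

theorem Phi_Psi (hμ : μ ≠ 0) (m : K[X][X]) : Phi K μ hμ (Psi K μ m) = m := by
  ext1 N
  rw [Phi, rho_Psi_coeff, Finset.sum_eq_single (N, 0)]
  · simp [tau]
  · rintro ⟨i, j⟩ hx hne
    have : j ≠ 0 := by
      rintro rfl
      simp at hx
      exact hne (by rw [hx])
    simp [coeff_one, this]
  · simp

theorem w_aeval_u (hμ : μ ≠ 0) (i : ℕ) :
    w K μ * u K μ ^ i = u K μ ^ i * aeval (w K μ) (tau K μ i) := by
  induction i with
  | zero => simp [tau]
  | succ i ih =>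
    have key : ∀ p : K[X], aeval (w K μ) p * u K μ = u K μ * aeval (w K μ) (p.comp (C μ * X + 1)) := by
      intro p
      induction p using Polynomial.induction_on with
      | C a => simp [Algebra.commutes]
      | add p q hp hq => simp only [map_add, add_comp, add_mul, mul_add, hp, hq]
      | monomial k a ih =>
        rw [pow_succ, ← mul_assoc, map_mul, aeval_X, mul_assoc, w_mul_u K μ hμ, ← mul_assoc, ih,
          mul_comp (_ * _), X_comp, map_mul, mul_assoc]
        simp [Algebra.smul_def]
    have ht : ∀ i, (tau K μ i).comp (C μ * X + 1) = tau K μ (i + 1) := by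
      intro i
      induction i with
      | zero => simp [tau]
      | succ i ih => rw [tau, add_comp, mul_comp, ih]; simp [tau]
    rw [pow_succ, ← mul_assoc, ih, mul_assoc, key, ht, mul_assoc]

theorem Psi_surj (hμ : μ ≠ 0) : Function.Surjective (Psi K μ) := by
  have hmul : ∀ a : TildeA K μ, ∀ m, ∃ mm, a * Psi K μ m = Psi K μ mm := by
    intro a
    induction a using induct with
    | hK r => exact fun m => ⟨r • m, by rw [map_smul, Algebra.smul_def]⟩
    | hu =>
      intro m
      refine ⟨X * m, ?_⟩
      induction m using Polynomial.induction_on' with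
      | add p q hp hq => rw [map_add, mul_add, hp, hq, mul_add, map_add]
      | monomial i a =>
        rw [X_mul_monomial, Psi_monomial, Psi_monomial, ← mul_assoc, pow_succ']
    | hw =>
      intro m
      refine ⟨W K μ m, ?_⟩
      induction m using Polynomial.induction_on' with
      | add p q hp hq => rw [map_add, mul_add, hp, hq, map_add, map_add]
      | monomial i a =>
        rw [W_monomial, Psi_monomial, Psi_monomial, ← mul_assoc, w_aeval_u K μ hμ, mul_assoc,
          map_mul]
    | hadd a b ha hb =>
      intro m
      obtain ⟨x, hx⟩ := ha m
      obtain ⟨y, hy⟩ := hb m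
      exact ⟨x + y, by rw [add_mul, hx, hy, map_add]⟩
    | hmul a b ha hb =>
      intro m
      obtain ⟨y, hy⟩ := hb m
      obtain ⟨x, hx⟩ := ha y
      exact ⟨x, by rw [mul_assoc, hy, hx]⟩
  intro a
  obtain ⟨m, hm⟩ := hmul a 1
  refine ⟨m, ?_⟩
  rw [← hm]
  have : Psi K μ 1 = 1 := by
    rw [← monomial_zero_one, Psi_monomial]; simp
  rw [this, mul_one]

theorem Phi_mul (hμ : μ ≠ 0) (a b : TildeA K μ) :
    Phi K μ hμ (a * b) = rho K μ hμ a (Phi K μ hμ b) := by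
  rw [Phi, map_mul]; rfl

theorem Phi_inj (hμ : μ ≠ 0) {a : TildeA K μ} (h : Phi K μ hμ a = 0) : a = 0 := by
  obtain ⟨m, rfl⟩ := Psi_surj K μ hμ a
  rw [Phi_Psi] at h
  rw [h, map_zero]

theorem w_cancel (hμ : μ ≠ 0) (b : TildeA K μ) (h : w K μ * b = 0) : b = 0 := by
  apply Phi_inj K μ hμ
  have h2 : Phi K μ hμ (w K μ * b) = 0 := by rw [h]; simp [Phi]
  rw [Phi_mul, rho_w] at h2
  ext1 j
  have h3 := congrArg (fun q => q.coeff j) h2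
  simp only [W_coeff, coeff_zero, mul_eq_zero, tau_ne K μ hμ j, false_or] at h3
  simpa using h3

theorem top_coeff (hμ : μ ≠ 0) (m n : K[X][X]) (hm : m ≠ 0) (hn : n ≠ 0) :
    (rho K μ hμ (Psi K μ m) n).coeff (m.natDegree + n.natDegree) ≠ 0 := by
  rw [rho_Psi_coeff, Finset.sum_eq_single (m.natDegree, n.natDegree)]
  · refine mul_ne_zero ?_ (by simpa using hn)
    intro h
    rw [comp_eq_zero_iff] at h
    rcases h with h | ⟨_, h⟩
    · simp [hm] at h
    · have := tau_natDegree K μ hμ n.natDegree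
      rw [h, natDegree_C] at this
      simp at this
  · rintro ⟨i, j⟩ hx hne
    rw [Finset.HasAntidiagonal.mem_antidiagonal] at hx
    dsimp only at hx
    by_cases hi : m.natDegree < i
    · simp [coeff_eq_zero_of_natDegree_lt hi]
    · have hj : n.natDegree < j := by
        by_contra hj
        apply hne
        ext <;> simp <;> omega
      simp [coeff_eq_zero_of_natDegree_lt hj]
  · simp

theorem not_cyclic (hμ : μ ≠ 0) (f : TildeA K μ) (c : TildeA K μ)
    (hf : (1 + u K μ) * f = w K μ * c)
    (H : ∀ x c, (1 + u K μ) * x = w K μ * c → ∃ r, x = f * r) : False := by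
  have hwu := w_mul_u K μ hμ
  -- the degree zero element
  obtain ⟨h, hh⟩ := H (aeval (w K μ) (X * tau K μ 1 : K[X]))
    (aeval (w K μ) (tau K μ 1) + u K μ * w K μ) (by
      have h1 := w_aeval_u K μ hμ 1
      rw [pow_one] at h1
      rw [add_mul, one_mul, map_mul, aeval_X, mul_add, ← mul_assoc (w K μ) (u K μ), h1]
      congr 1
      rw [mul_assoc]
      congr 1
      have hcomm := congrArg (aeval (w K μ)) (mul_comm (X : K[X]) (tau K μ 1))
      simpa only [map_mul, aeval_X] using hcomm)
  obtain ⟨m, rfl⟩ := Psi_surj K μ hμ f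
  have hPa : ∀ p : K[X], Phi K μ hμ (aeval (w K μ) p) = C p := by
    intro p
    have := Phi_Psi K μ hμ (monomial 0 p)
    rwa [Psi_monomial, pow_zero, one_mul] at this
  have e1 := congrArg (Phi K μ hμ) hh
  rw [hPa, Phi_mul] at e1
  have hne : (X * tau K μ 1 : K[X]) ≠ 0 := mul_ne_zero X_ne_zero (tau_ne K μ hμ 1)
  have hm : m ≠ 0 := by
    rintro rfl
    simp at e1
    exact tau_ne K μ hμ 1 e1
  have hn : Phi K μ hμ h ≠ 0 := by
    intro h0
    rw [h0, map_zero, C_eq_zero] at e1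
    exact hne e1
  have htop := top_coeff K μ hμ m _ hm hn
  rw [← e1, coeff_C] at htop
  have hd : m.natDegree = 0 := by
    by_contra hd
    rw [if_neg (by omega)] at htop
    exact htop rfl
  rw [eq_C_of_natDegree_eq_zero hd] at hf H
  generalize m.coeff 0 = p at hf H
  rw [← monomial_zero_left, Psi_monomial, pow_zero, one_mul] at hf H
  have hdvd : tau K μ 1 ∣ p := by
    have e2 := congrArg (fun q => (Phi K μ hμ q).coeff 1) hf
    simp only [Phi_mul, hPa, rho_w, W_coeff, map_add, map_one, LinearMap.add_apply,
      Module.End.one_apply, rho_u, coeff_add] at e2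
    rw [coeff_C, coeff_X_mul, coeff_C_zero] at e2
    exact ⟨_, by simpa using e2⟩
  obtain ⟨r, hr⟩ := H (aeval (w K μ) (C μ * X : K[X]) + u K μ * aeval (w K μ) (tau K μ 2))
    (μ • 1 + (μ + 1) • u K μ + u K μ ^ 2) (by
      have h1 := w_aeval_u K μ hμ 1
      have h2 := w_aeval_u K μ hμ 2
      rw [pow_one] at h1
      rw [mul_add, mul_add, mul_add, h2, mul_smul_comm, mul_smul_comm, h1]
      simp [tau, Algebra.algebraMap_eq_smul_one]
      simp [add_mul, mul_add, pow_two, mul_assoc, add_smul]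
      abel)
  have e3 := congrArg (fun q => (Phi K μ hμ q).coeff 0) hr
  have hPadd : ∀ a b, Phi K μ hμ (a + b) = Phi K μ hμ a + Phi K μ hμ b := by
    intro a b; simp [Phi]
  simp only [hPadd, hPa] at e3
  rw [Phi_mul, Phi_mul, rho_u, rho_aeval, coeff_add, coeff_C_zero, mul_coeff_zero] at e3
  simp only [coeff_X_zero, zero_mul, add_zero] at e3
  have hdvd2 : tau K μ 1 ∣ C μ * X := by
    rw [e3]
    simpa [tau] using hdvd.mul_right _
  have hone : tau K μ 1 ∣ 1 := by
    have h5 := dvd_sub (dvd_refl (tau K μ 1)) hdvd2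
    simpa [tau] using h5
  have hu := isUnit_of_dvd_one hone
  have := natDegree_eq_zero_of_isUnit hu
  rw [tau_natDegree K μ hμ] at this
  exact one_ne_zero this

end TildeA

/-- For `char K = 0` and `μ ≠ 0`, the right ideal
`K = {f ∈ Ã : (1+u)f ∈ ωÃ}` of `Ã` is stably free but not free as a right `Ã`-module. -/
theorem tildeA_has_nontrivial_stablyFree_right_ideal
    (K : Type) [Field K] [CharZero K] (μ : K) (hμ : μ ≠ 0) :
    IsStablyFreeRight (TildeA K μ)
      (Submodule.comap (leftMulRight (1 + TildeA.u K μ))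
        (Submodule.span (TildeA K μ)ᵐᵒᵖ {TildeA.w K μ})) ∧
    ¬ Module.Free (TildeA K μ)ᵐᵒᵖ
      (Submodule.comap (leftMulRight (1 + TildeA.u K μ))
        (Submodule.span (TildeA K μ)ᵐᵒᵖ {TildeA.w K μ})) := by
  have hrel : (1 + TildeA.u K μ) * (μ • TildeA.w K μ + 1) -
      TildeA.w K μ * (μ • 1 + TildeA.u K μ) = 1 := by
    rw [mul_add (TildeA.w K μ), TildeA.w_mul_u K μ hμ, add_mul, one_mul, mul_smul_comm, mul_one]
    abel
  let e := LinearEquiv.ofBijective _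
    (splitMap_bijective _ _ _ _ hrel (TildeA.w_cancel K μ hμ))
  constructor
  · refine ⟨1, 2, ⟨?_⟩⟩
    exact ((LinearEquiv.refl _ _).prodCongr (LinearEquiv.funUnique (Fin 1) _ _)) ≪≫ₗ e.symm ≪≫ₗ
      (LinearEquiv.finTwoArrow _ _).symm
  · intro hfree
    have : InvariantBasisNumber (TildeA K μ) :=
      ibn_of_hom (TildeA.liftPair K μ hμ (0 : K) 0 (by simp)).toRingHom
    obtain ⟨⟨f, hf⟩, H⟩ := cyclic_of_free e
    obtain ⟨c, hc⟩ := (mem_rightIdeal_iff _ _ _).1 hf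
    refine TildeA.not_cyclic K μ hμ f c hc fun x d hx => ?_
    obtain ⟨r, hr⟩ := H ⟨x, (mem_rightIdeal_iff _ _ _).2 ⟨d, hx⟩⟩
    exact ⟨r, congrArg Subtype.val hr⟩
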